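/- Let n ≥ 2 and let (m_1,…,m_{n−1}) ∈ ℕ^{n−1} satisfy m_1 + ⋯ + m_{n−1} = n. Then ∑_{j : m_j ≥ 1} α_{n−1}(m_1,…,m_j − 1,…,m_{n−1}) = α_n(0, m_1,…,m_{n−1}), where for r ≥ 1 and (y_1,…,y_r) ∈ ℕ^r one sets α_r(y_1,…,y_r) = (1/(24 · y_1!⋯y_r!)) · ( r! − ∑_{i=2}^{r} (i−2)! (r−i)! e_i(y_1,…,y_r) ), and e_i denotes the i-th elementary symmetric polynomial e_i(y) = ∑_{S ⊆ {1,…,r}, |S| = i} ∏_{l ∈ S} y_l. -/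

import Mathlib

/-- The `i`-th elementary symmetric polynomial of `y_1, …, y_r ∈ ℕ`, as a rational
number: `e_i(y) = ∑_{S ⊆ {1,…,r}, |S| = i} ∏_{l ∈ S} y_l`. -/
def esymmQ (r i : ℕ) (y : Fin r → ℕ) : ℚ :=
  ∑ S ∈ Finset.powersetCard i (Finset.univ : Finset (Fin r)), ∏ l ∈ S, (y l : ℚ)

/-- `α_r(y_1,…,y_r) = (1/(24 · y_1!⋯y_r!)) · ( r! − ∑_{i=2}^{r} (i−2)! (r−i)! e_i(y) )`. -/
def alphaCoeff (r : ℕ) (y : Fin r → ℕ) : ℚ :=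
  (1 / (24 * ∏ l, (Nat.factorial (y l) : ℚ))) *
    ((Nat.factorial r : ℚ) -
      ∑ i ∈ Finset.Icc 2 r,
        (Nat.factorial (i - 2) : ℚ) * (Nat.factorial (r - i) : ℚ) * esymmQ r i y)

lemma esymmQ_cons_zero (n i : ℕ) (m : Fin n → ℕ) :
    esymmQ (n + 1) i (Fin.cons 0 m : Fin (n + 1) → ℕ) = esymmQ n i m := by
  unfold esymmQ
  have h : ∑ S ∈ Finset.powersetCard i (Finset.univ : Finset (Fin n)), ∏ l ∈ S, (m l : ℚ)
      = ∑ S ∈ Finset.powersetCard i ((Finset.univ : Finset (Fin n)).map (Fin.succEmb n)),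
        ∏ l ∈ S, (((Fin.cons 0 m : Fin (n + 1) → ℕ) l : ℕ) : ℚ) := by
    rw [Finset.powersetCard_map, Finset.sum_map]
    refine Finset.sum_congr rfl fun S _ => ?_
    simp [Finset.mapEmbedding_apply, Finset.prod_map]
  rw [h]
  symm
  apply Finset.sum_subset
  · exact Finset.powersetCard_mono (Finset.subset_univ _)
  · intro S hS hS'
    have h0 : (0 : Fin (n + 1)) ∈ S := by
      by_contra h0
      apply hS'
      rw [Finset.mem_powersetCard] at hS ⊢
      refine ⟨fun x hx => ?_, hS.2⟩
      have hx0 : x ≠ 0 := fun e => h0 (e ▸ hx)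
      obtain ⟨y, rfl⟩ := Fin.exists_succ_eq.mpr hx0
      simp
    exact Finset.prod_eq_zero h0 (by simp)

lemma sum_mul_prod_update (n : ℕ) (m : Fin n → ℕ) (S : Finset (Fin n)) :
    ∑ j : Fin n, (m j : ℚ) * ∏ l ∈ S, ((Function.update m j (m j - 1) l : ℕ) : ℚ) =
      (((∑ j, m j : ℕ) : ℚ) - S.card) * ∏ l ∈ S, (m l : ℚ) := by
  have h : ∀ j : Fin n, (m j : ℚ) * ∏ l ∈ S, ((Function.update m j (m j - 1) l : ℕ) : ℚ) =
      ((m j : ℚ) - if j ∈ S then 1 else 0) * ∏ l ∈ S, (m l : ℚ) := by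
    intro j
    by_cases hj : j ∈ S
    · rw [← Finset.mul_prod_erase S _ hj, ← Finset.mul_prod_erase S (fun l => (m l : ℚ)) hj]
      have : ∏ l ∈ S.erase j, ((Function.update m j (m j - 1) l : ℕ) : ℚ)
          = ∏ l ∈ S.erase j, (m l : ℚ) :=
        Finset.prod_congr rfl fun l hl => by
          rw [Function.update_of_ne (Finset.ne_of_mem_erase hl)]
      rw [this, Function.update_self, if_pos hj]
      rcases Nat.eq_zero_or_pos (m j) with h0 | h0
      · simp [h0]
      · rw [Nat.cast_sub h0]; push_cast; ring
    · have : ∏ l ∈ S, ((Function.update m j (m j - 1) l : ℕ) : ℚ) = ∏ l ∈ S, (m l : ℚ) :=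
        Finset.prod_congr rfl fun l hl => by
          rw [Function.update_of_ne (by rintro rfl; exact hj hl)]
      rw [this, if_neg hj, sub_zero]
  rw [Finset.sum_congr rfl fun j _ => h j, ← Finset.sum_mul, Finset.sum_sub_distrib]
  simp

lemma sum_mul_esymmQ_update (n i : ℕ) (m : Fin n → ℕ) :
    ∑ j : Fin n, (m j : ℚ) * esymmQ n i (Function.update m j (m j - 1)) =
      (((∑ j, m j : ℕ) : ℚ) - i) * esymmQ n i m := by
  unfold esymmQ
  simp_rw [Finset.mul_sum]
  rw [Finset.sum_comm]
  refine Finset.sum_congr rfl fun S hS => ?_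
  rw [sum_mul_prod_update, (Finset.mem_powersetCard.mp hS).2]

lemma esymmQ_succ_self (n : ℕ) (m : Fin n → ℕ) : esymmQ n (n + 1) m = 0 := by
  unfold esymmQ
  rw [Finset.powersetCard_eq_empty.mpr (by simp), Finset.sum_empty]

lemma prod_factorial_update (n : ℕ) (m : Fin n → ℕ) (j : Fin n) (hj : 1 ≤ m j) :
    ∏ l, (Nat.factorial (m l) : ℚ) =
      (m j : ℚ) * ∏ l, (Nat.factorial (Function.update m j (m j - 1) l) : ℚ) := by
  rw [← Finset.mul_prod_erase Finset.univ _ (Finset.mem_univ j),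
    ← Finset.mul_prod_erase Finset.univ
      (fun l => (Nat.factorial (Function.update m j (m j - 1) l) : ℚ)) (Finset.mem_univ j)]
  have : ∏ l ∈ Finset.univ.erase j, (Nat.factorial (Function.update m j (m j - 1) l) : ℚ)
      = ∏ l ∈ Finset.univ.erase j, (Nat.factorial (m l) : ℚ) :=
    Finset.prod_congr rfl fun l hl => by
      rw [Function.update_of_ne (Finset.ne_of_mem_erase hl)]
  rw [this, Function.update_self, ← mul_assoc, ← Nat.cast_mul,
    Nat.mul_factorial_pred (by omega)]

/-- **The coefficients `α` obey the genus-one string equation.**  For a tuple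
`(m_1,…,m_{n'−1})` of length `n'−1 ≥ 1` (written below with `n = n'−1`, so `n' = n+1 ≥ 2`)
summing to `n'`, the sum over those `j` with `m_j ≥ 1` of the values of `α` at the tuples
obtained by decreasing `m_j` by `1` equals the value of `α` at the tuple with a zero
entry prepended:
`∑_{j : m_j ≥ 1} α_{n'−1}(m_1,…,m_j − 1,…,m_{n'−1}) = α_{n'}(0, m_1,…,m_{n'−1})`. -/
theorem alphaCoeff_string_equation (n : ℕ) (hn : 1 ≤ n) (m : Fin n → ℕ)
    (hm : ∑ i, m i = n + 1) :
    ∑ j : Fin n,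
        (if 1 ≤ m j then alphaCoeff n (Function.update m j (m j - 1)) else 0) =
      alphaCoeff (n + 1) (Fin.cons 0 m) := by
  have hterm : ∀ j : Fin n,
      (if 1 ≤ m j then alphaCoeff n (Function.update m j (m j - 1)) else 0) =
      (1 / (24 * ∏ l, (Nat.factorial (m l) : ℚ))) * ((m j : ℚ) * (Nat.factorial n : ℚ) -
        ∑ i ∈ Finset.Icc 2 n, (Nat.factorial (i - 2) : ℚ) * (Nat.factorial (n - i) : ℚ) *
          ((m j : ℚ) * esymmQ n i (Function.update m j (m j - 1)))) := by
    intro j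
    split_ifs with hj
    · have hj0 : (m j : ℚ) ≠ 0 := by
        exact_mod_cast (by omega : m j ≠ 0)
      have hP : ∏ l, (Nat.factorial (Function.update m j (m j - 1) l) : ℚ) ≠ 0 :=
        Finset.prod_ne_zero_iff.mpr fun l _ => by exact_mod_cast Nat.factorial_ne_zero _
      have hs : ∑ i ∈ Finset.Icc 2 n,
          (Nat.factorial (i - 2) : ℚ) * (Nat.factorial (n - i) : ℚ) *
          ((m j : ℚ) * esymmQ n i (Function.update m j (m j - 1))) =
          (m j : ℚ) * ∑ i ∈ Finset.Icc 2 n,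
          (Nat.factorial (i - 2) : ℚ) * (Nat.factorial (n - i) : ℚ) *
          esymmQ n i (Function.update m j (m j - 1)) := by
        rw [Finset.mul_sum]
        exact Finset.sum_congr rfl fun i _ => by ring
      rw [hs, prod_factorial_update n m j hj]
      unfold alphaCoeff
      field_simp
    · have h0 : m j = 0 := by omega
      simp [h0]
  rw [Finset.sum_congr rfl fun j _ => hterm j, ← Finset.mul_sum, Finset.sum_sub_distrib,
    Finset.sum_comm]
  simp_rw [← Finset.mul_sum, sum_mul_esymmQ_update]
  unfold alphaCoeff
  simp_rw [esymmQ_cons_zero]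
  rw [Fin.prod_univ_succ, ← Finset.sum_mul, ← Nat.cast_sum, hm,
    Finset.sum_Icc_succ_top (by omega), esymmQ_succ_self]
  simp only [Fin.cons_zero, Fin.cons_succ, Nat.factorial_zero, Nat.cast_one, one_mul, mul_zero,
    add_zero]
  congr 2
  · rw [Nat.factorial_succ, Nat.cast_mul]
  · refine Finset.sum_congr rfl fun i hi => ?_
    have hi' := (Finset.mem_Icc.mp hi).2
    rw [Nat.succ_sub hi', Nat.factorial_succ]
    push_cast [Nat.cast_sub hi']
    ring
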